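/- arXiv:1302.0084 — 2 statements merged into one kernel-verified Lean document; each statement's English description precedes it below -/
import Mathlib

section
/- Let A, P > 0 and r > 1/(√(1+P) − 1). Let X be a real random variable with |X| ≤ A almost surely, let Z ~ N(0,1) be independent of X, and let P_Y be the law of Y = X + Z. Then the total variation distance satisfies TV(P_Y, N(0, 1+P)) ≥ 2 Q(r A) − 2 Q( A (r√(1+P) − 1) ), where TV(P,Q) = sup_E |P(E) − Q(E)| over Borel sets E. -/
/-!
Both laws are compared on the event `{y | σ u < |y|}`, where `σ = √(1 + P)` and `u = r A`. Under
`N(0, σ²)` it has probability exactly `2 Q(u)` by scaling and symmetry, whereas `|X + Z| > σ u`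
forces `|Z| > σ u - A`, which has probability at most `2 Q(σ u - A)`.
-/

open MeasureTheory ProbabilityTheory

/-- The standard normal tail function `Q(x) = ∫_x^∞ e^{-y²/2}/√(2π) dy`. -/
noncomputable def gaussQ (x : ℝ) : ℝ :=
  ∫ y in Set.Ioi x, Real.exp (-(y ^ 2) / 2) / Real.sqrt (2 * Real.pi)

/-- Total variation distance between two measures: `sup_E |μ(E) - ν(E)|` over Borel sets. -/
noncomputable def tvDist {α : Type*} [MeasurableSpace α] (μ ν : Measure α) : ℝ :=
  ⨆ E : {s : Set α // MeasurableSet s}, |(μ E).toReal - (ν E).toReal|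

open scoped NNReal

section TotalVariation

variable {α : Type*} [MeasurableSpace α]

lemma abs_measureReal_sub_le_tvDist (μ ν : Measure α) [IsFiniteMeasure μ] [IsFiniteMeasure ν]
    {s : Set α} (hs : MeasurableSet s) : |μ.real s - ν.real s| ≤ tvDist μ ν := by
  refine le_ciSup (f := fun E : {s : Set α // MeasurableSet s} ↦ |μ.real E - ν.real E|)
    ⟨max (μ.real Set.univ) (ν.real Set.univ), ?_⟩ ⟨s, hs⟩
  rintro _ ⟨E, rfl⟩
  exact abs_sub_le_of_nonneg_of_le
    measureReal_nonneg (le_max_of_le_left (measureReal_mono (Set.subset_univ _)))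
    measureReal_nonneg (le_max_of_le_right (measureReal_mono (Set.subset_univ _)))

end TotalVariation

section SymmetricTails

lemma measureReal_neg_eq_self {G : Type*} [InvolutiveNeg G] [MeasurableSpace G] [MeasurableNeg G]
    (μ : Measure G) [μ.IsNegInvariant] (s : Set G) : μ.real (-s) = μ.real s := by
  rw [measureReal_def, Measure.measure_neg, measureReal_def]

variable {G : Type*} [AddCommGroup G] [LinearOrder G]

lemma setOf_lt_abs_eq_Ioi_union_neg_Ioi (t : G) :
    {x | t < |x|} = Set.Ioi t ∪ -Set.Ioi t := by
  ext x
  simp only [Set.mem_ofPred_eq, lt_abs, Set.mem_union, Set.mem_Ioi, Set.mem_neg]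

variable [MeasurableSpace G] [MeasurableNeg G] (μ : Measure G) [μ.IsNegInvariant]

lemma measureReal_setOf_lt_abs_le (t : G) : μ.real {x | t < |x|} ≤ 2 * μ.real (Set.Ioi t) := by
  calc μ.real {x | t < |x|}
      = μ.real (Set.Ioi t ∪ -Set.Ioi t) := by rw [setOf_lt_abs_eq_Ioi_union_neg_Ioi]
    _ ≤ μ.real (Set.Ioi t) + μ.real (-Set.Ioi t) := measureReal_union_le _ _
    _ = 2 * μ.real (Set.Ioi t) := by rw [measureReal_neg_eq_self, two_mul]

lemma measureReal_setOf_lt_abs [IsOrderedAddMonoid G] [TopologicalSpace G]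
    [OrderClosedTopology G] [OpensMeasurableSpace G] [IsFiniteMeasure μ] {t : G} (ht : 0 ≤ t) :
    μ.real {x | t < |x|} = 2 * μ.real (Set.Ioi t) := by
  have hdisj : Disjoint (Set.Ioi t) (-Set.Ioi t) :=
    Set.disjoint_left.2 fun x (hx : t < x) (hx' : t < -x) ↦
      (neg_pos.1 (ht.trans_lt hx')).not_gt (ht.trans_lt hx)
  rw [setOf_lt_abs_eq_Ioi_union_neg_Ioi, measureReal_union hdisj measurableSet_Ioi.neg,
    measureReal_neg_eq_self, two_mul]

end SymmetricTails

section Gaussian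

instance gaussianReal_zero_isNegInvariant (v : ℝ≥0) : (gaussianReal 0 v).IsNegInvariant :=
  ⟨gaussianReal_map_neg.trans (by rw [neg_zero])⟩

lemma gaussianReal_real_Ioi_eq_gaussQ (t : ℝ) :
    (gaussianReal 0 1).real (Set.Ioi t) = gaussQ t := by
  rw [measureReal_def, gaussianReal_apply_eq_integral _ one_ne_zero,
    ENNReal.toReal_ofReal (integral_nonneg (gaussianPDFReal_nonneg 0 1))]
  simp only [gaussianPDFReal, gaussQ, NNReal.coe_one, mul_one, sub_zero, div_eq_inv_mul]

lemma gaussianReal_map_sqrt_mul (v : ℝ≥0) :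
    (gaussianReal 0 1).map (√v * ·) = gaussianReal 0 v := by
  rw [gaussianReal_map_const_mul, mul_zero, mul_one]
  congr 1
  exact NNReal.eq (Real.sq_sqrt v.coe_nonneg)

lemma gaussianReal_real_sqrt_mul_lt_abs {v : ℝ≥0} (hv : v ≠ 0) {u : ℝ} (hu : 0 ≤ u) :
    (gaussianReal 0 v).real {x | √v * u < |x|} = 2 * gaussQ u := by
  have hσ : 0 < √(v : ℝ) := Real.sqrt_pos.2 (NNReal.coe_pos.2 hv.bot_lt)
  have hpre : (√v * ·) ⁻¹' {x : ℝ | √v * u < |x|} = {x | u < |x|} := by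
    ext x
    simp only [Set.mem_preimage, Set.mem_ofPred_eq, abs_mul, abs_of_pos hσ,
      mul_lt_mul_iff_right₀ hσ]
  rw [← gaussianReal_map_sqrt_mul,
    map_measureReal_apply (by fun_prop) (measurableSet_lt (by fun_prop) (by fun_prop)), hpre,
    measureReal_setOf_lt_abs _ hu, gaussianReal_real_Ioi_eq_gaussQ]

end Gaussian

section BoundedPerturbation

variable {Ω : Type*} {mΩ : MeasurableSpace Ω} {μ : Measure Ω}

lemma measureReal_lt_norm_add_le {E : Type*} [SeminormedAddGroup E] [IsFiniteMeasure μ]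
    {X Z : Ω → E} {A : ℝ} (hXA : ∀ᵐ ω ∂μ, ‖X ω‖ ≤ A) (t : ℝ) :
    μ.real {ω | t < ‖X ω + Z ω‖} ≤ μ.real {ω | t - A < ‖Z ω‖} := by
  refine ENNReal.toReal_mono (measure_ne_top _ _) (measure_mono_ae ?_)
  filter_upwards [hXA] with ω hω (ht : t < ‖X ω + Z ω‖)
  change t - A < ‖Z ω‖
  linarith [norm_add_le (X ω) (Z ω)]

lemma map_add_real_lt_abs_le_gaussQ {X Z : Ω → ℝ} {A : ℝ} (hX : AEMeasurable X μ)
    (hZ : HasLaw Z (gaussianReal 0 1) μ) (hXA : ∀ᵐ ω ∂μ, |X ω| ≤ A) (t : ℝ) :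
    (μ.map (fun ω ↦ X ω + Z ω)).real {y | t < |y|} ≤ 2 * gaussQ (t - A) := by
  have := hZ.isProbabilityMeasure
  calc (μ.map (fun ω ↦ X ω + Z ω)).real {y | t < |y|}
      = μ.real {ω | t < |X ω + Z ω|} :=
        map_measureReal_apply_of_aemeasurable (hX.add hZ.aemeasurable)
          (measurableSet_lt (by fun_prop) (by fun_prop))
    _ ≤ μ.real {ω | t - A < |Z ω|} := by
        simpa only [Real.norm_eq_abs] using measureReal_lt_norm_add_le (Z := Z) hXA t
    _ = (gaussianReal 0 1).real {z | t - A < |z|} :=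
        hZ.measureReal_eq (p := fun z ↦ t - A < |z|)
          (measurableSet_lt (by fun_prop) (by fun_prop))
    _ ≤ 2 * (gaussianReal 0 1).real (Set.Ioi (t - A)) := measureReal_setOf_lt_abs_le _ _
    _ = 2 * gaussQ (t - A) := by rw [gaussianReal_real_Ioi_eq_gaussQ]

theorem output_tv_lower_bound_general {X Z : Ω → ℝ} {A u : ℝ} {v : ℝ≥0} (hv : v ≠ 0)
    (hu : 0 ≤ u) (hX : AEMeasurable X μ) (hZ : HasLaw Z (gaussianReal 0 1) μ)
    (hXA : ∀ᵐ ω ∂μ, |X ω| ≤ A) :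
    2 * gaussQ u - 2 * gaussQ (√v * u - A) ≤
      tvDist (μ.map (fun ω ↦ X ω + Z ω)) (gaussianReal 0 v) := by
  have := hZ.isProbabilityMeasure
  set E : Set ℝ := {y | √v * u < |y|}
  have hE : MeasurableSet E := measurableSet_lt (by fun_prop) (by fun_prop)
  calc 2 * gaussQ u - 2 * gaussQ (√v * u - A)
      ≤ (gaussianReal 0 v).real E - (μ.map (fun ω ↦ X ω + Z ω)).real E :=
        sub_le_sub (gaussianReal_real_sqrt_mul_lt_abs hv hu).ge
          (map_add_real_lt_abs_le_gaussQ hX hZ hXA _)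
    _ ≤ |(μ.map (fun ω ↦ X ω + Z ω)).real E - (gaussianReal 0 v).real E| := by
        rw [abs_sub_comm]; exact le_abs_self _
    _ ≤ tvDist (μ.map (fun ω ↦ X ω + Z ω)) (gaussianReal 0 v) :=
        abs_measureReal_sub_le_tvDist _ _ hE

end BoundedPerturbation

/-- Let `A, P > 0` and `r > 1/(√(1+P)-1)`, let `X` be a real random variable
with `|X| ≤ A` a.s. and `Z ~ N(0,1)` independent of `X`. Then the law `P_Y` of `Y = X + Z`
satisfies `TV(P_Y, N(0,1+P)) ≥ 2Q(rA) - 2Q(A(r√(1+P)-1))`. -/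
theorem output_tv_lower_bound
    {Ω : Type*} [MeasureSpace Ω] [IsProbabilityMeasure (ℙ : Measure Ω)]
    (A P r : ℝ) (hA : 0 < A) (hP : 0 < P)
    (hr : 1 / (Real.sqrt (1 + P) - 1) < r)
    (X Z : Ω → ℝ) (hX : Measurable X) (hZ : Measurable Z)
    (hindep : IndepFun X Z ℙ)
    (hZlaw : Measure.map Z ℙ = gaussianReal 0 1)
    (hXA : ∀ᵐ ω ∂ℙ, |X ω| ≤ A) :
    2 * gaussQ (r * A) - 2 * gaussQ (A * (r * Real.sqrt (1 + P) - 1)) ≤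
      tvDist (Measure.map (fun ω => X ω + Z ω) ℙ) (gaussianReal 0 (1 + P).toNNReal) := by
  have hσ : 1 < √(1 + P) := Real.lt_sqrt_of_sq_lt (by linarith)
  have hr0 : 0 ≤ r := (one_div_nonneg.2 (sub_nonneg.2 hσ.le)).trans hr.le
  have hv : (1 + P).toNNReal ≠ 0 := (Real.toNNReal_pos.2 (by linarith)).ne'
  have hu : A * (r * √(1 + P) - 1) = √(1 + P).toNNReal * (r * A) - A := by
    rw [Real.coe_toNNReal _ (by linarith)]
    ring
  rw [hu]
  exact output_tv_lower_bound_general hv (mul_nonneg hr0 hA.le) hX.aemeasurable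
    ⟨hZ.aemeasurable, hZlaw⟩ hXA
end

section
/- Let A, P > 0 and r > 1/(√(1+P) − 1). Let X be a real random variable with |X| ≤ A almost surely and E[X²] ≤ P, and let Z ~ N(0,1) be independent of X. Then (1/2) ln(1+P) − I(X; X+Z) ≥ 8 · ( Q(r A) − Q( (r√(1+P) − 1) A ) )². -/
open MeasureTheory ProbabilityTheory

open scoped Classical in
/-- Kullback–Leibler divergence (natural logarithm), valued in `EReal`:
`D(μ‖ν) = ∫ log(dμ/dν) dμ` if `μ ≪ ν` and the log-likelihood ratio is integrable,
and `+∞` otherwise. -/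
noncomputable def klDiv {α : Type*} [MeasurableSpace α] (μ ν : Measure α) : EReal :=
  if μ ≪ ν ∧ Integrable (llr μ ν) μ then ((∫ x, llr μ ν x ∂μ : ℝ) : EReal) else ⊤

/-- The mutual information `I(X; Y)` of two real random variables: the KL divergence between
the joint law of `(X, Y)` and the product of its marginals. -/
noncomputable def mutInfoRV {Ω : Type*} [MeasureSpace Ω] (X Y : Ω → ℝ) : EReal :=
  klDiv (Measure.map (fun ω => (X ω, Y ω)) ℙ)
    ((Measure.map (fun ω => (X ω, Y ω)) ℙ).fst.prod (Measure.map (fun ω => (X ω, Y ω)) ℙ).snd)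

open Real (exp log pi)
open scoped ENNReal NNReal

/-!
Write `Y = X + Z` and `q = N(0, v)` with `v = 1 + P`. The golden formula
`D(P_XY ‖ P_X × q) = D(P_Y ‖ q) + I(X; Y)` and the explicit value of its left-hand side, which is
at most `(1/2) log v` because `E[Y²] ≤ v`, show that the gap to capacity is at least `D(P_Y ‖ q)`.
Pinsker's inequality, obtained from the Donsker–Varadhan bound and Hoeffding's lemma, bounds this
below by `2 (P_Y(B) - q(B))²` for every event `B`. For `B = {|y| > rA√v}` one has
`q(B) = 2 Q(rA)`, whereas `|X| ≤ A` forces `P_Y(B) ≤ Pr(|Z| > rA√v - A) = 2 Q((r√v - 1)A)`.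
-/

section RelativeEntropy

variable {α : Type*} [MeasurableSpace α] {μ ν : Measure α}
  [IsProbabilityMeasure μ] [IsProbabilityMeasure ν]

theorem klDiv_eq_coe_klDiv : klDiv μ ν = ((InformationTheory.klDiv μ ν : ℝ≥0∞) : EReal) := by
  rw [klDiv]
  split_ifs with h
  · have hnonneg := InformationTheory.integral_llr_add_sub_measure_univ_nonneg h.1 h.2
    rw [InformationTheory.klDiv_of_ac_of_integrable h.1 h.2]
    simp_all [EReal.coe_ennreal_ofReal]
  · rw [InformationTheory.klDiv_eq_top_iff.2 (not_and.1 h)]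
    rfl

theorem integral_sub_log_integral_exp_le_klDiv {f : α → ℝ} (hkl : InformationTheory.klDiv μ ν ≠ ∞)
    (hfμ : Integrable f μ) (hfν : Integrable (fun x ↦ exp (f x)) ν) :
    ∫ x, f x ∂μ - log (∫ x, exp (f x) ∂ν) ≤ (InformationTheory.klDiv μ ν).toReal := by
  obtain ⟨hac, hint⟩ := InformationTheory.klDiv_ne_top_iff.1 hkl
  have := isProbabilityMeasure_tilted hfν
  have hnonneg := InformationTheory.integral_llr_add_sub_measure_univ_nonneg
    (hac.trans (absolutelyContinuous_tilted hfν)) (integrable_llr_tilted_right hac hfμ hint hfν)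
  rw [integral_llr_tilted_right hac hfμ hfν hint] at hnonneg
  rw [InformationTheory.toReal_klDiv_of_measure_eq hac (by simp)]
  simp only [probReal_univ] at hnonneg
  linarith

theorem sq_integral_le_mul_klDiv {g : α → ℝ} {c : ℝ≥0} (hkl : InformationTheory.klDiv μ ν ≠ ∞)
    (hgμ : Integrable g μ) (hg : HasSubgaussianMGF g c ν) :
    (∫ x, g x ∂μ) ^ 2 ≤ 2 * c * (InformationTheory.klDiv μ ν).toReal := by
  have hquad (t : ℝ) : 0 ≤ c / 2 * (t * t) + -(∫ x, g x ∂μ) * t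
      + (InformationTheory.klDiv μ ν).toReal := by
    have hdual := integral_sub_log_integral_exp_le_klDiv hkl (hgμ.const_mul t)
      (hg.integrable_exp_mul t)
    have hcgf : log (∫ x, exp (t * g x) ∂ν) ≤ c * t ^ 2 / 2 := hg.cgf_le t
    rw [integral_const_mul] at hdual
    linarith
  have := discrim_le_zero hquad
  rw [discrim] at this
  linarith

theorem two_mul_sq_measureReal_sub_le_klDiv {B : Set α} (hB : MeasurableSet B) :
    ENNReal.ofReal (2 * (μ.real B - ν.real B) ^ 2) ≤ InformationTheory.klDiv μ ν := by
  by_cases hkl : InformationTheory.klDiv μ ν = ∞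
  · simp [hkl]
  rw [ENNReal.ofReal_le_iff_le_toReal hkl]
  have hind : Measurable (B.indicator (1 : α → ℝ)) := measurable_one.indicator hB
  have hsub := hasSubgaussianMGF_of_mem_Icc (μ := ν) (a := 0) (b := 1) hind.aemeasurable
    (ae_of_all _ fun x ↦ ⟨Set.indicator_nonneg (by simp) x,
      Set.indicator_le_self' (by simp) x⟩)
  have hint : Integrable (B.indicator (1 : α → ℝ)) μ := (integrable_const (1 : ℝ)).indicator hB
  calc 2 * (μ.real B - ν.real B) ^ 2
      = 2 * (∫ x, (B.indicator (1 : α → ℝ) x - ∫ y, B.indicator (1 : α → ℝ) y ∂ν) ∂μ) ^ 2 := by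
        rw [integral_sub hint (integrable_const _), integral_const, probReal_univ, one_smul,
          integral_indicator_one hB, integral_indicator_one hB]
    _ ≤ 2 * (2 * ((‖(1 : ℝ) - 0‖₊ / 2) ^ 2 : ℝ≥0) * (InformationTheory.klDiv μ ν).toReal) := by
        gcongr
        exact sq_integral_le_mul_klDiv hkl (hint.sub (integrable_const _)) hsub
    _ = (InformationTheory.klDiv μ ν).toReal := by
        rw [sub_zero, nnnorm_one]
        push_cast
        ring

end RelativeEntropy

section GoldenFormula

variable {α β : Type*} [MeasurableSpace α] [MeasurableSpace β]

theorem klDiv_map_measurableEquiv (μ ν : Measure α) [IsFiniteMeasure μ] [IsFiniteMeasure ν]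
    (e : α ≃ᵐ β) :
    InformationTheory.klDiv (μ.map e) (ν.map e) = InformationTheory.klDiv μ ν := by
  refine le_antisymm (InformationTheory.klDiv_map_le μ ν e.measurable) ?_
  simpa using InformationTheory.klDiv_map_le (μ.map e) (ν.map e) e.symm.measurable

theorem klDiv_snd_prod [StandardBorelSpace β] [Nonempty β] (J : Measure (α × β))
    (q : Measure α) [IsProbabilityMeasure J] [IsProbabilityMeasure q] :
    InformationTheory.klDiv J (q.prod J.snd) =
      InformationTheory.klDiv J.fst q + InformationTheory.klDiv J (J.fst.prod J.snd) := by
  simpa only [J.disintegrate, Measure.compProd_const] using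
    InformationTheory.klDiv_compProd_eq_add J.fst q J.condKernel (Kernel.const α J.snd)

theorem klDiv_prod_snd [StandardBorelSpace α] [Nonempty α] (J : Measure (α × β))
    (q : Measure β) [IsProbabilityMeasure J] [IsProbabilityMeasure q] :
    InformationTheory.klDiv J (J.fst.prod q) =
      InformationTheory.klDiv J.snd q + InformationTheory.klDiv J (J.fst.prod J.snd) := by
  have hswap (ν : Measure (α × β)) [IsFiniteMeasure ν] :
      InformationTheory.klDiv (J.map Prod.swap) (ν.map Prod.swap) = InformationTheory.klDiv J ν :=
    klDiv_map_measurableEquiv J ν .prodComm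
  have := Measure.isProbabilityMeasure_map (μ := J) measurable_swap.aemeasurable
  rw [← hswap, ← hswap, Measure.prod_swap, Measure.prod_swap]
  simpa only [Measure.fst_map_swap, Measure.snd_map_swap] using
    klDiv_snd_prod (J.map Prod.swap) q

end GoldenFormula

section LogLikelihood

variable {α : Type*} [MeasurableSpace α] {ν : Measure α} [SigmaFinite ν] {f g : α → ℝ≥0∞}

theorem llr_withDensity_withDensity (hf : Measurable f) (hg : Measurable g)
    (hf_top : ∀ x, f x ≠ ∞) (hf_zero : ∀ x, f x ≠ 0) (hg_zero : ∀ x, g x ≠ 0)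
    (hg_top : ∀ x, g x ≠ ∞) :
    llr (ν.withDensity f) (ν.withDensity g)
      =ᵐ[ν] fun x ↦ log (f x).toReal - log (g x).toReal := by
  have := SigmaFinite.withDensity_of_ne_top (μ := ν) (ae_of_all _ hf_top)
  have hrnDeriv := Measure.rnDeriv_withDensity_right (ν.withDensity f) ν hg.aemeasurable
    (ae_of_all _ hg_zero) (ae_of_all _ hg_top)
  filter_upwards [hrnDeriv, Measure.rnDeriv_withDensity ν hf] with x hfg hfx
  rw [llr, hfg, hfx, ENNReal.toReal_mul, ENNReal.toReal_inv, mul_comm, ← div_eq_mul_inv,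
    Real.log_div (ENNReal.toReal_ne_zero.2 ⟨hf_zero x, hf_top x⟩)
      (ENNReal.toReal_ne_zero.2 ⟨hg_zero x, hg_top x⟩)]

end LogLikelihood

section Gaussian

variable {v w : ℝ≥0}

theorem log_gaussianPDFReal (hv : v ≠ 0) (m x : ℝ) :
    log (gaussianPDFReal m v x) = -(log (2 * pi * v) / 2) - (x - m) ^ 2 / (2 * v) := by
  rw [gaussianPDFReal, Real.log_mul (by positivity) (by positivity), Real.log_inv,
    Real.log_sqrt (by positivity), Real.log_exp]
  ring

theorem map_add_prod_gaussianReal (μ : Measure ℝ) [SFinite μ] (hw : w ≠ 0) :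
    (μ.prod (gaussianReal 0 w)).map (fun z ↦ (z.1, z.1 + z.2)) =
      (μ.prod volume).withDensity (fun z ↦ gaussianPDF z.1 w z.2) := by
  refine Measure.ext_of_lintegral _ fun f hf ↦ ?_
  rw [lintegral_map hf (by fun_prop), lintegral_prod _ (by fun_prop),
    lintegral_withDensity_eq_lintegral_mul _ (by fun_prop) hf, lintegral_prod _ (by fun_prop)]
  refine lintegral_congr fun x ↦ ?_
  have hfx : Measurable fun y ↦ f (x, y) := by fun_prop
  calc ∫⁻ z, f (x, x + z) ∂gaussianReal 0 w
      = ∫⁻ y, f (x, y) ∂gaussianReal x w := by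
        rw [← lintegral_map hfx (by fun_prop), gaussianReal_map_const_add, zero_add]
    _ = ∫⁻ y, gaussianPDF x w y * f (x, y) := by
        rw [gaussianReal_of_var_ne_zero _ hw,
          lintegral_withDensity_eq_lintegral_mul _ (by fun_prop) hfx]
        rfl

theorem prod_gaussianReal (μ : Measure ℝ) [SFinite μ] (m : ℝ) (hv : v ≠ 0) :
    μ.prod (gaussianReal m v) = (μ.prod volume).withDensity (fun z ↦ gaussianPDF m v z.2) := by
  rw [gaussianReal_of_var_ne_zero _ hv, prod_withDensity_right (by fun_prop)]

theorem llr_withDensity_gaussianPDF_prod_gaussianReal (μ : Measure ℝ) [SigmaFinite μ]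
    (hw : w ≠ 0) (hv : v ≠ 0) :
    llr ((μ.prod volume).withDensity fun z ↦ gaussianPDF z.1 w z.2) (μ.prod (gaussianReal 0 v))
      =ᵐ[μ.prod volume]
        fun z ↦ 1 / 2 * log (v / w) + z.2 ^ 2 / (2 * v) - (z.2 - z.1) ^ 2 / (2 * w) := by
  rw [prod_gaussianReal μ 0 hv]
  refine (llr_withDensity_withDensity (by fun_prop) (by fun_prop) (fun _ ↦ gaussianPDF_lt_top.ne)
    (fun _ ↦ (gaussianPDF_pos _ hw _).ne') (fun _ ↦ (gaussianPDF_pos _ hv _).ne')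
    (fun _ ↦ gaussianPDF_lt_top.ne)).trans (ae_of_all _ fun z ↦ ?_)
  have hpi : 2 * pi ≠ 0 := by positivity
  simp only [toReal_gaussianPDF, log_gaussianPDFReal hw, log_gaussianPDFReal hv]
  rw [Real.log_mul hpi (by positivity), Real.log_mul hpi (by positivity),
    Real.log_div (by positivity) (by positivity)]
  ring

end Gaussian

section GaussianChannel

variable {Ω : Type*} [MeasurableSpace Ω] {P : Measure Ω} {X Z : Ω → ℝ} {v w : ℝ≥0}

theorem integral_sq_of_hasLaw_gaussianReal (hZ : HasLaw Z (gaussianReal 0 w) P) :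
    ∫ ω, Z ω ^ 2 ∂P = w := by
  rw [← variance_fun_id_gaussianReal (μ := 0) (v := w),
    variance_of_integral_eq_zero (by fun_prop) integral_id_gaussianReal]
  exact hZ.integral_comp (f := (· ^ 2)) (by fun_prop)

theorem integral_add_sq_of_indepFun (hX : MemLp X 2 P) (hZ : MemLp Z 2 P) (hindep : X ⟂ᵢ[P] Z)
    (hZ_mean : ∫ ω, Z ω ∂P = 0) :
    ∫ ω, (X ω + Z ω) ^ 2 ∂P = ∫ ω, X ω ^ 2 ∂P + ∫ ω, Z ω ^ 2 ∂P := by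
  have hsq_int : Integrable (fun ω ↦ X ω ^ 2 + Z ω ^ 2) P := hX.integrable_sq.add hZ.integrable_sq
  have hXZ_int : Integrable (fun ω ↦ 2 * (X ω * Z ω)) P := (hX.integrable_mul hZ).const_mul 2
  have hXZ : ∫ ω, X ω * Z ω ∂P = 0 := by
    rw [hindep.integral_fun_mul_eq_mul_integral hX.1 hZ.1, hZ_mean, mul_zero]
  calc ∫ ω, (X ω + Z ω) ^ 2 ∂P
      = ∫ ω, (X ω ^ 2 + Z ω ^ 2 + 2 * (X ω * Z ω)) ∂P := by congr with ω; ring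
    _ = ∫ ω, X ω ^ 2 ∂P + ∫ ω, Z ω ^ 2 ∂P := by
      rw [integral_add hsq_int hXZ_int, integral_add hX.integrable_sq hZ.integrable_sq,
        integral_const_mul, hXZ, mul_zero, add_zero]

variable [IsProbabilityMeasure P]

theorem map_prodMk_add_eq_withDensity (hX : AEMeasurable X P) (hZ : HasLaw Z (gaussianReal 0 w) P)
    (hindep : X ⟂ᵢ[P] Z) (hw : w ≠ 0) :
    P.map (fun ω ↦ (X ω, X ω + Z ω)) =
      ((P.map X).prod volume).withDensity (fun z ↦ gaussianPDF z.1 w z.2) := by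
  rw [← map_add_prod_gaussianReal _ hw, ← hZ.map_eq,
    ← hindep.map_prod_eq_prod_map_map hX hZ.aemeasurable,
    AEMeasurable.map_map_of_aemeasurable (by fun_prop) (by fun_prop)]
  rfl

theorem map_prodMk_add_absolutelyContinuous (hX : AEMeasurable X P)
    (hZ : HasLaw Z (gaussianReal 0 w) P) (hindep : X ⟂ᵢ[P] Z) (hw : w ≠ 0) (hv : v ≠ 0) :
    P.map (fun ω ↦ (X ω, X ω + Z ω)) ≪ (P.map X).prod (gaussianReal 0 v) := by
  rw [map_prodMk_add_eq_withDensity hX hZ hindep hw]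
  exact (withDensity_absolutelyContinuous _ _).trans
    (Measure.AbsolutelyContinuous.rfl.prod (gaussianReal_absolutelyContinuous' 0 hv))

theorem llr_map_prodMk_add_prod_gaussianReal (hX : AEMeasurable X P)
    (hZ : HasLaw Z (gaussianReal 0 w) P) (hindep : X ⟂ᵢ[P] Z) (hw : w ≠ 0) (hv : v ≠ 0) :
    (fun ω ↦ llr (P.map fun ω ↦ (X ω, X ω + Z ω)) ((P.map X).prod (gaussianReal 0 v))
        (X ω, X ω + Z ω)) =ᵐ[P]
      fun ω ↦ 1 / 2 * log (v / w) + (X ω + Z ω) ^ 2 / (2 * v) - Z ω ^ 2 / (2 * w) := by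
  have := Measure.isProbabilityMeasure_map hX
  have hpair : AEMeasurable (fun ω ↦ (X ω, X ω + Z ω)) P := by fun_prop
  have hllr := llr_withDensity_gaussianPDF_prod_gaussianReal (P.map X) hw hv
  rw [← map_prodMk_add_eq_withDensity hX hZ hindep hw] at hllr
  have hac : P.map (fun ω ↦ (X ω, X ω + Z ω)) ≪ (P.map X).prod volume :=
    map_prodMk_add_eq_withDensity hX hZ hindep hw ▸ withDensity_absolutelyContinuous _ _
  filter_upwards [ae_of_ae_map hpair (hac.ae_le hllr)] with ω hω
  simpa only [add_sub_cancel_left] using hω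

theorem klDiv_map_prodMk_add_prod_gaussianReal (hX : MemLp X 2 P)
    (hZ : HasLaw Z (gaussianReal 0 w) P) (hindep : X ⟂ᵢ[P] Z) (hw : w ≠ 0) (hv : v ≠ 0) :
    InformationTheory.klDiv (P.map fun ω ↦ (X ω, X ω + Z ω)) ((P.map X).prod (gaussianReal 0 v)) =
      ENNReal.ofReal (1 / 2 * log (v / w) + (∫ ω, X ω ^ 2 ∂P + w) / (2 * v) - 1 / 2) := by
  have hZ_L2 : MemLp Z 2 P := hZ.hasGaussianLaw.memLp_two
  have hX_meas : AEMeasurable X P := hX.1.aemeasurable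
  have hpair : AEMeasurable (fun ω ↦ (X ω, X ω + Z ω)) P := by fun_prop
  have := Measure.isProbabilityMeasure_map hX_meas
  have := Measure.isProbabilityMeasure_map hpair
  have hllr := llr_map_prodMk_add_prod_gaussianReal hX_meas hZ hindep hw hv
  have hY_int : Integrable (fun ω ↦ (X ω + Z ω) ^ 2 / (2 * v)) P :=
    (hX.add hZ_L2).integrable_sq.div_const _
  have hlogY_int : Integrable (fun ω ↦ 1 / 2 * log (v / w) + (X ω + Z ω) ^ 2 / (2 * v)) P :=
    (integrable_const _).add hY_int
  have hZ_int : Integrable (fun ω ↦ Z ω ^ 2 / (2 * w)) P := hZ_L2.integrable_sq.div_const _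
  have hllr_int := (integrable_map_measure (stronglyMeasurable_llr _ _).aestronglyMeasurable
    hpair).2 ((hlogY_int.sub hZ_int).congr hllr.symm)
  rw [InformationTheory.klDiv_of_ac_of_integrable
      (map_prodMk_add_absolutelyContinuous hX_meas hZ hindep hw hv) hllr_int,
    probReal_univ, probReal_univ, add_sub_cancel_right,
    integral_map hpair (stronglyMeasurable_llr _ _).aestronglyMeasurable, integral_congr_ae hllr,
    integral_sub hlogY_int hZ_int, integral_add (integrable_const _) hY_int, integral_const,
    probReal_univ, one_smul, integral_div, integral_div,
    integral_add_sq_of_indepFun hX hZ_L2 hindep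
      (hZ.integral_eq.trans integral_id_gaussianReal),
    integral_sq_of_hasLaw_gaussianReal hZ]
  congr 2
  field_simp

theorem two_mul_sq_measureReal_sub_add_klDiv_le (hX : MemLp X 2 P)
    (hZ : HasLaw Z (gaussianReal 0 w) P) (hindep : X ⟂ᵢ[P] Z) (hw : w ≠ 0) (hv : v ≠ 0)
    (hpower : ∫ ω, X ω ^ 2 ∂P + w ≤ v) {B : Set ℝ} (hB : MeasurableSet B) :
    ENNReal.ofReal (2 * ((P.map fun ω ↦ X ω + Z ω).real B - (gaussianReal 0 v).real B) ^ 2) +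
        InformationTheory.klDiv (P.map fun ω ↦ (X ω, X ω + Z ω))
          ((P.map X).prod (P.map fun ω ↦ X ω + Z ω)) ≤
      ENNReal.ofReal (1 / 2 * log (v / w)) := by
  have hX_meas : AEMeasurable X P := hX.1.aemeasurable
  have hY : AEMeasurable (fun ω ↦ X ω + Z ω) P := hX_meas.add hZ.aemeasurable
  have := Measure.isProbabilityMeasure_map (hX_meas.prodMk hY)
  have := Measure.isProbabilityMeasure_map hY
  have hgolden := klDiv_prod_snd (P.map fun ω ↦ (X ω, X ω + Z ω)) (gaussianReal 0 v)
  rw [Measure.fst_map_prodMk₀ hY, Measure.snd_map_prodMk₀ hX_meas] at hgolden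
  have hratio : (∫ ω, X ω ^ 2 ∂P + w) / (2 * v) ≤ 1 / 2 := by
    rw [div_le_div_iff₀ (by positivity) two_pos]
    linarith
  calc _ ≤ InformationTheory.klDiv (P.map fun ω ↦ X ω + Z ω) (gaussianReal 0 v) +
        InformationTheory.klDiv (P.map fun ω ↦ (X ω, X ω + Z ω))
          ((P.map X).prod (P.map fun ω ↦ X ω + Z ω)) := by
        gcongr
        exact two_mul_sq_measureReal_sub_le_klDiv hB
    _ = ENNReal.ofReal (1 / 2 * log (v / w) + (∫ ω, X ω ^ 2 ∂P + w) / (2 * v) - 1 / 2) := by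
        rw [← hgolden, klDiv_map_prodMk_add_prod_gaussianReal hX hZ hindep hw hv]
    _ ≤ ENNReal.ofReal (1 / 2 * log (v / w)) := by
        gcongr
        linarith

end GaussianChannel

section MutualInformation

variable {Ω : Type*} [MeasureSpace Ω] [IsProbabilityMeasure (ℙ : Measure Ω)] {X Y Z : Ω → ℝ}

theorem mutInfoRV_eq_coe_klDiv (hX : AEMeasurable X) (hY : AEMeasurable Y) :
    mutInfoRV X Y = ((InformationTheory.klDiv (Measure.map (fun ω ↦ (X ω, Y ω)) ℙ)
      ((Measure.map X ℙ).prod (Measure.map Y ℙ)) : ℝ≥0∞) : EReal) := by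
  have := Measure.isProbabilityMeasure_map (hX.prodMk hY)
  rw [mutInfoRV, klDiv_eq_coe_klDiv, Measure.fst_map_prodMk₀ hY, Measure.snd_map_prodMk₀ hX]

theorem two_mul_sq_measureReal_sub_le_log_sub_mutInfoRV {v w : ℝ≥0} (hX : MemLp X 2)
    (hZ : HasLaw Z (gaussianReal 0 w)) (hindep : X ⟂ᵢ Z) (hw : w ≠ 0)
    (hpower : (∫ ω, X ω ^ 2) + w ≤ v) {B : Set ℝ} (hB : MeasurableSet B) :
    ((2 * ((Measure.map (fun ω ↦ X ω + Z ω) ℙ).real B - (gaussianReal 0 v).real B) ^ 2 : ℝ) :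
        EReal) ≤
      ((1 / 2 * log (v / w) : ℝ) : EReal) - mutInfoRV X (fun ω ↦ X ω + Z ω) := by
  have hwv : w ≤ v := by
    have : 0 ≤ ∫ ω, X ω ^ 2 := by positivity
    exact NNReal.coe_le_coe.1 (by linarith)
  have hv : v ≠ 0 := (hw.bot_lt.trans_le hwv).ne'
  have hlog : 0 ≤ 1 / 2 * log (v / w) := by
    have : (1 : ℝ) ≤ v / w := (one_le_div (by positivity)).2 (by exact_mod_cast hwv)
    have := Real.log_nonneg this
    positivity
  have hX_meas : AEMeasurable X := hX.1.aemeasurable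
  have hY : AEMeasurable fun ω ↦ X ω + Z ω := hX_meas.add hZ.aemeasurable
  rw [mutInfoRV_eq_coe_klDiv hX_meas hY,
    EReal.le_sub_iff_add_le (.inl (EReal.coe_ennreal_ne_bot _)) (.inr (EReal.coe_ne_top _))]
  have := EReal.coe_ennreal_le_coe_ennreal_iff.2
    (two_mul_sq_measureReal_sub_add_klDiv_le hX hZ hindep hw hv hpower hB)
  rwa [EReal.coe_ennreal_add, EReal.coe_ennreal_ofReal, EReal.coe_ennreal_ofReal,
    max_eq_left (by positivity), max_eq_left hlog] at this

end MutualInformation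

section GaussianTail

theorem gaussQ_eq_measureReal_Ioi (a : ℝ) : gaussQ a = (gaussianReal 0 1).real (Set.Ioi a) := by
  rw [measureReal_def, gaussianReal_apply_eq_integral _ one_ne_zero, ENNReal.toReal_ofReal
    (setIntegral_nonneg measurableSet_Ioi fun y _ ↦ gaussianPDFReal_nonneg _ _ _), gaussQ]
  simp only [gaussianPDFReal, NNReal.coe_one, mul_one, sub_zero, div_eq_inv_mul]

theorem gaussQ_antitone : Antitone gaussQ := fun a b hab ↦ by
  simpa only [gaussQ_eq_measureReal_Ioi] using measureReal_mono (Set.Ioi_subset_Ioi hab)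

theorem gaussianReal_real_Iio_neg (v : ℝ≥0) (a : ℝ) :
    (gaussianReal 0 v).real (Set.Iio (-a)) = (gaussianReal 0 v).real (Set.Ioi a) := by
  have hsymm : (gaussianReal 0 v).map (fun x ↦ -x) = gaussianReal 0 v := by
    rw [gaussianReal_map_neg, neg_zero]
  conv_lhs => rw [← hsymm, map_measureReal_apply measurable_neg measurableSet_Iio]
  simp

theorem gaussianReal_real_lt_abs {a : ℝ} (ha : 0 ≤ a) :
    (gaussianReal 0 1).real {y | a < |y|} = 2 * gaussQ a := by
  have hsplit : {y : ℝ | a < |y|} = Set.Ioi a ∪ Set.Iio (-a) := by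
    ext y
    simp only [Set.mem_ofPred_eq, lt_abs, lt_neg, Set.mem_union, Set.mem_Ioi, Set.mem_Iio]
  have hdisj : Disjoint (Set.Ioi a) (Set.Iio (-a)) :=
    Set.disjoint_left.2 fun y (hy : a < y) (hy' : y < -a) ↦ by linarith
  rw [hsplit, measureReal_union hdisj measurableSet_Iio, gaussianReal_real_Iio_neg,
    gaussQ_eq_measureReal_Ioi, two_mul]

theorem gaussianReal_real_mul_sqrt_lt_abs {v : ℝ≥0} (hv : v ≠ 0) {a : ℝ} (ha : 0 ≤ a) :
    (gaussianReal 0 v).real {y | a * √v < |y|} = 2 * gaussQ a := by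
  have hscale : (gaussianReal 0 1).map (√v * ·) = gaussianReal 0 v := by
    rw [gaussianReal_map_const_mul, mul_zero, mul_one]
    congr
    simp
  have hsqrt : 0 < √(v : ℝ) := by positivity
  rw [← gaussianReal_real_lt_abs ha, ← hscale, map_measureReal_apply (by fun_prop)
    (measurableSet_lt (by fun_prop) (by fun_prop))]
  simp only [Set.preimage_ofPred_eq, abs_mul, abs_of_pos hsqrt, mul_comm (√(v : ℝ)),
    mul_lt_mul_iff_left₀ hsqrt]

variable {Ω : Type*} [MeasurableSpace Ω] {P : Measure Ω} [IsFiniteMeasure P] {X Z : Ω → ℝ} {A : ℝ}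

theorem measureReal_lt_abs_add_le (hXA : ∀ᵐ ω ∂P, |X ω| ≤ A) (t : ℝ) :
    P.real {ω | t < |X ω + Z ω|} ≤ P.real {ω | t - A < |Z ω|} := by
  refine ENNReal.toReal_mono (measure_ne_top _ _) (measure_mono_ae ?_)
  filter_upwards [hXA] with ω hX (hXZ : t < |X ω + Z ω|)
  have := abs_add_le (X ω) (Z ω)
  change t - A < |Z ω|
  linarith

theorem measureReal_lt_abs_add_le_two_mul_gaussQ (hXA : ∀ᵐ ω ∂P, |X ω| ≤ A)
    (hZ : HasLaw Z (gaussianReal 0 1) P) {t : ℝ} (ht : A ≤ t) :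
    P.real {ω | t < |X ω + Z ω|} ≤ 2 * gaussQ (t - A) := by
  rw [← gaussianReal_real_lt_abs (sub_nonneg.2 ht), ← hZ.map_eq,
    map_measureReal_apply_of_aemeasurable hZ.aemeasurable
      (measurableSet_lt (by fun_prop) (by fun_prop))]
  exact measureReal_lt_abs_add_le hXA t

end GaussianTail

section CapacityGap

variable {Ω : Type*} [MeasureSpace Ω] [IsProbabilityMeasure (ℙ : Measure Ω)] {X Z : Ω → ℝ}

theorem eight_mul_sq_gaussQ_sub_le_log_sub_mutInfoRV {v : ℝ≥0} {a A : ℝ} (ha : 0 ≤ a)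
    (haA : a + A ≤ a * √v) (hX : AEMeasurable X) (hXA : ∀ᵐ ω, |X ω| ≤ A)
    (hZ : HasLaw Z (gaussianReal 0 1)) (hindep : X ⟂ᵢ Z) (hpower : (∫ ω, X ω ^ 2) + 1 ≤ v) :
    ((8 * (gaussQ a - gaussQ (a * √v - A)) ^ 2 : ℝ) : EReal) ≤
      ((1 / 2 * log v : ℝ) : EReal) - mutInfoRV X (fun ω ↦ X ω + Z ω) := by
  have hv : 0 < v := by
    have : 0 ≤ ∫ ω, X ω ^ 2 := by positivity
    exact NNReal.coe_pos.1 (by linarith)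
  have hY : AEMeasurable fun ω ↦ X ω + Z ω := hX.add hZ.aemeasurable
  have hA : A ≤ a * √v := by linarith
  let B : Set ℝ := {y | a * √v < |y|}
  have hB : MeasurableSet B := measurableSet_lt (by fun_prop) (by fun_prop)
  have hB_gaussian : (gaussianReal 0 v).real B = 2 * gaussQ a :=
    gaussianReal_real_mul_sqrt_lt_abs hv.ne' ha
  have hB_output : (Measure.map (fun ω ↦ X ω + Z ω) ℙ).real B ≤ 2 * gaussQ (a * √v - A) := by
    rw [map_measureReal_apply_of_aemeasurable hY hB]
    exact measureReal_lt_abs_add_le_two_mul_gaussQ hXA hZ hA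
  have hgap := two_mul_sq_measureReal_sub_le_log_sub_mutInfoRV
    (.of_bound hX.aestronglyMeasurable A hXA) hZ hindep one_ne_zero hpower hB
  rw [NNReal.coe_one, div_one] at hgap
  refine le_trans (EReal.coe_le_coe_iff.2 ?_) hgap
  have hQ : gaussQ (a * √v - A) ≤ gaussQ a := gaussQ_antitone (by linarith)
  have hsq := pow_le_pow_left₀ (sub_nonneg.2 hQ)
    (show gaussQ a - gaussQ (a * √v - A) ≤ ((gaussianReal 0 v).real B -
      (Measure.map (fun ω ↦ X ω + Z ω) ℙ).real B) / 2 by linarith) 2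
  linarith

end CapacityGap

/-- Let `A, P > 0` and `r > 1/(√(1+P)-1)`, and let `X` be a real random
variable with `|X| ≤ A` a.s. and `E[X²] ≤ P`, with `Z ~ N(0,1)` independent of `X`. Then
`(1/2) ln(1+P) - I(X; X+Z) ≥ 8 (Q(rA) - Q((r√(1+P)-1)A))²`. -/
theorem mutualInfo_gap_lower_bound
    {Ω : Type*} [MeasureSpace Ω] [IsProbabilityMeasure (ℙ : Measure Ω)]
    (A P r : ℝ) (hA : 0 < A) (hP : 0 < P)
    (hr : 1 / (Real.sqrt (1 + P) - 1) < r)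
    (X Z : Ω → ℝ) (hX : Measurable X) (hZ : Measurable Z)
    (hindep : IndepFun X Z ℙ)
    (hZlaw : Measure.map Z ℙ = gaussianReal 0 1)
    (hXA : ∀ᵐ ω ∂ℙ, |X ω| ≤ A)
    (hX2 : ∫ ω, (X ω) ^ 2 ∂ℙ ≤ P) :
    ((8 * (gaussQ (r * A) - gaussQ ((r * Real.sqrt (1 + P) - 1) * A)) ^ 2 : ℝ) : EReal) ≤
      (((1 / 2) * Real.log (1 + P) : ℝ) : EReal) - mutInfoRV X (fun ω => X ω + Z ω) := by
  lift P to ℝ≥0 using hP.le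
  have hs : 0 < √(1 + P) - 1 := sub_pos.2 (Real.lt_sqrt_of_sq_lt (by linarith))
  have hr_pos : 0 < r := (one_div_pos.2 hs).trans hr
  have hthreshold : r * A + A ≤ r * A * √(1 + P) := by
    have : 1 * A ≤ r * (√(1 + P) - 1) * A := by
      gcongr
      exact ((div_lt_iff₀ hs).1 hr).le
    linarith
  rw [show (r * √(1 + P) - 1) * A = r * A * √(1 + P) - A by ring]
  exact eight_mul_sq_gaussQ_sub_le_log_sub_mutInfoRV (v := 1 + P) (by positivity) hthreshold
    hX.aemeasurable hXA ⟨hZ.aemeasurable, hZlaw⟩ hindep (by push_cast; linarith)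
end
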